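/- For all real x and every natural number j, the physicists' Hermite polynomial satisfies the bound |H_j(x)| \le k \sqrt{j!} \, 2^{j/2} e^{x^2/2} with constant k = 1.086435. -/

import Mathlib

def hermiteH : ℕ → ℝ → ℝ
  | 0, _ => 1
  | 1, x => 2 * x
  | n + 2, x => 2 * x * hermiteH (n + 1) x - 2 * ((n : ℝ) + 1) * hermiteH n x

open Real Set

theorem hermiteH_add_two (n : ℕ) (x : ℝ) :
    hermiteH (n + 2) x = 2 * x * hermiteH (n + 1) x - 2 * ((n : ℝ) + 1) * hermiteH n x := by
  rw [hermiteH]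

theorem hermiteH_neg (n : ℕ) (x : ℝ) : hermiteH n (-x) = (-1) ^ n * hermiteH n x := by
  induction n using Nat.twoStepInduction with
  | zero => simp [hermiteH]
  | one => simp [hermiteH]
  | more n ih₀ ih₁ => rw [hermiteH_add_two, hermiteH_add_two, ih₀, ih₁]; ring

theorem abs_hermiteH_abs (n : ℕ) (x : ℝ) : |hermiteH n (|x|)| = |hermiteH n x| := by
  rcases abs_cases x with ⟨h, -⟩ | ⟨h, -⟩ <;> simp [h, hermiteH_neg, abs_mul]

theorem hasDerivAt_hermiteH (n : ℕ) (x : ℝ) :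
    HasDerivAt (hermiteH n) (2 * x * hermiteH n x - hermiteH (n + 1) x) x := by
  induction n using Nat.twoStepInduction with
  | zero => simpa [hermiteH, funext_iff] using hasDerivAt_const x (1 : ℝ)
  | one =>
    have h : HasDerivAt (fun t : ℝ => 2 * t) (2 * 1) x := (hasDerivAt_id x).const_mul 2
    have e : hermiteH 1 = fun t : ℝ => 2 * t := by funext t; simp [hermiteH]
    rw [e]
    refine h.congr_deriv ?_
    simp [hermiteH]
  | more n ih₀ ih₁ =>
    have h := (((hasDerivAt_id x).const_mul 2).mul ih₁).sub (ih₀.const_mul (2 * ((n : ℝ) + 1)))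
    have e : hermiteH (n + 2) =
        (fun t : ℝ => 2 * id t) * hermiteH (n + 1) -
          fun t => 2 * ((n : ℝ) + 1) * hermiteH n t := by
      funext t; simp [hermiteH_add_two]
    rw [e]
    refine h.congr_deriv ?_
    simp only [hermiteH_add_two, Pi.sub_apply, Pi.mul_apply, id]
    push_cast
    ring

/-- The (unnormalized) Hermite function `Hₙ(x) exp(-x²/2)`. -/
noncomputable def hermiteFun (n : ℕ) (x : ℝ) : ℝ := hermiteH n x * exp (-(x ^ 2 / 2))

/-- The derivative of `hermiteFun n`. -/
noncomputable def hermiteFunDeriv (n : ℕ) (x : ℝ) : ℝ :=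
  (x * hermiteH n x - hermiteH (n + 1) x) * exp (-(x ^ 2 / 2))

theorem hasDerivAt_exp_neg_sq_half (x : ℝ) :
    HasDerivAt (fun t : ℝ => exp (-(t ^ 2 / 2))) (-x * exp (-(x ^ 2 / 2))) x := by
  have h := (((hasDerivAt_pow 2 x).div_const 2).neg).exp
  refine h.congr_deriv ?_
  simp only [Pi.neg_apply]
  norm_num
  ring

theorem hasDerivAt_hermiteFun (n : ℕ) (x : ℝ) :
    HasDerivAt (hermiteFun n) (hermiteFunDeriv n x) x := by
  have h := (hasDerivAt_hermiteH n x).mul (hasDerivAt_exp_neg_sq_half x)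
  refine h.congr_deriv ?_
  rw [hermiteFunDeriv]
  ring

theorem hasDerivAt_hermiteFunDeriv (n : ℕ) (x : ℝ) :
    HasDerivAt (hermiteFunDeriv n) (-((2 * n + 1 - x ^ 2) * hermiteFun n x)) x := by
  have h := (((hasDerivAt_id x).mul (hasDerivAt_hermiteH n x)).sub
    (hasDerivAt_hermiteH (n + 1) x)).mul (hasDerivAt_exp_neg_sq_half x)
  refine h.congr_deriv ?_
  simp only [hermiteFun, hermiteH_add_two, Pi.sub_apply, Pi.mul_apply, id]
  ring

/-- A Sonin-type bound: for `y'' + (N - x²) y = 0`, the function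
`√Q (y² + (2 Q y' - x y)² / (4 Q³ + 2 Q + 5 x²))` with `Q = N - x²` is nonincreasing on `[0, b]`. -/
theorem sonin_bound {y z : ℝ → ℝ} {N b : ℝ} (hb : 0 ≤ b) (hbN : b ^ 2 < N)
    (hy : ∀ x, HasDerivAt y (z x) x)
    (hz : ∀ x, HasDerivAt z (-((N - x ^ 2) * y x)) x) :
    √(N - b ^ 2) * y b ^ 2 ≤ √N * (y 0 ^ 2 + z 0 ^ 2 / N) := by
  have hN : 0 < N := lt_of_le_of_lt (sq_nonneg b) hbN
  set J : ℝ → ℝ := fun x => √(N - x ^ 2) * (y x ^ 2 +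
    (2 * (N - x ^ 2) * z x - x * y x) ^ 2 /
      (4 * (N - x ^ 2) ^ 3 + 2 * (N - x ^ 2) + 5 * x ^ 2)) with hJ
  have hder : ∀ x ∈ Icc 0 b, ∃ d ≤ 0, HasDerivAt J d x := by
    rintro x ⟨hx0, hxb⟩
    have hQ : 0 < N - x ^ 2 := by nlinarith
    have hq : HasDerivAt (fun t : ℝ => N - t ^ 2) (-(2 * x)) x := by
      simpa using (hasDerivAt_pow 2 x).const_sub N
    have hD : 0 < 4 * (N - x ^ 2) ^ 3 + 2 * (N - x ^ 2) + 5 * x ^ 2 := by positivity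
    have hW := ((hq.const_mul 2).mul (hz x)).sub ((hasDerivAt_id x).mul (hy x))
    have hDd := (((hq.pow 3).const_mul 4).add (hq.const_mul 2)).add
      ((hasDerivAt_pow 2 x).const_mul 5)
    have h := (hq.sqrt hQ.ne').mul (((hy x).pow 2).add ((hW.pow 2).div hDd hD.ne'))
    refine ⟨_, ?_, h⟩
    have hs : 0 < √(N - x ^ 2) := sqrt_pos.mpr hQ
    have hss : √(N - x ^ 2) ^ 2 = N - x ^ 2 := sq_sqrt hQ.le
    have key : ∀ s Q u v : ℝ, 0 < s → s ^ 2 = Q → 0 < 4 * Q ^ 3 + 2 * Q + 5 * x ^ 2 →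
        -(2 * x) / (2 * s) * (u ^ 2 + (2 * Q * v - x * u) ^ 2 /
            (4 * Q ^ 3 + 2 * Q + 5 * x ^ 2)) +
          s * (2 * u * v + (2 * (2 * Q * v - x * u) * (-5 * x * v - (2 * Q ^ 2 + 1) * u) *
              (4 * Q ^ 3 + 2 * Q + 5 * x ^ 2) -
              (2 * Q * v - x * u) ^ 2 * (-24 * x * Q ^ 2 + 6 * x)) /
            (4 * Q ^ 3 + 2 * Q + 5 * x ^ 2) ^ 2) =
        -(2 * (9 * x * Q + 15 * x ^ 3) * (2 * Q * v - x * u) ^ 2 /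
          (s * (4 * Q ^ 3 + 2 * Q + 5 * x ^ 2) ^ 2)) := by
      rintro s Q u v hs rfl hD
      have := hD.ne'
      field_simp
      ring
    have k := key _ _ (y x) (z x) hs hss hD
    have hnp : -(2 * (9 * x * (N - x ^ 2) + 15 * x ^ 3) *
        (2 * (N - x ^ 2) * z x - x * y x) ^ 2 /
          (√(N - x ^ 2) * (4 * (N - x ^ 2) ^ 3 + 2 * (N - x ^ 2) + 5 * x ^ 2) ^ 2)) ≤ 0 := by
      rw [neg_nonpos]; positivity
    rw [← k] at hnp
    refine le_of_eq_of_le ?_ hnp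
    simp only [Pi.add_apply, Pi.sub_apply, Pi.mul_apply, Pi.pow_apply, Pi.div_apply, id]
    push_cast
    ring
  have hanti : AntitoneOn J (Icc 0 b) := by
    refine antitoneOn_of_deriv_nonpos (convex_Icc 0 b) ?_ ?_ ?_
    · intro x hx
      obtain ⟨d, -, h⟩ := hder x hx
      exact h.continuousAt.continuousWithinAt
    · intro x hx
      obtain ⟨d, -, h⟩ := hder x (interior_subset hx)
      exact h.differentiableAt.differentiableWithinAt
    · intro x hx
      obtain ⟨d, hd, h⟩ := hder x (interior_subset hx)
      rwa [h.deriv]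
  have hJb := hanti (left_mem_Icc.mpr hb) (right_mem_Icc.mpr hb) hb
  have hQ : 0 < N - b ^ 2 := by linarith
  refine le_trans ?_ (hJb.trans ?_)
  · simp only [hJ]
    gcongr
    exact le_add_of_nonneg_right (by positivity)
  · simp only [hJ]
    have e : (2 * (N - 0 ^ 2) * z 0 - 0 * y 0) ^ 2 /
        (4 * (N - 0 ^ 2) ^ 3 + 2 * (N - 0 ^ 2) + 5 * 0 ^ 2) ≤ z 0 ^ 2 / N := by
      rw [div_le_div_iff₀ (by norm_num; positivity) hN]
      nlinarith [mul_nonneg (sq_nonneg (z 0)) hN.le]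
    simp only [ne_eq, OfNat.ofNat_ne_zero, not_false_eq_true, zero_pow, sub_zero] at e ⊢
    gcongr

theorem hermiteH_nonneg_and_mul_le (n : ℕ) {x : ℝ} (hx : 0 ≤ x) (hn : 2 * (n : ℝ) ≤ x ^ 2) :
    0 ≤ hermiteH n x ∧ x * hermiteH n x ≤ hermiteH (n + 1) x := by
  induction n with
  | zero => simp [hermiteH]; linarith
  | succ n ih =>
    push_cast at hn
    obtain ⟨h₀, h₁⟩ := ih (by linarith)
    refine ⟨(mul_nonneg hx h₀).trans h₁, ?_⟩
    rw [hermiteH_add_two]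
    nlinarith [mul_le_mul_of_nonneg_left h₁ hx, mul_le_mul_of_nonneg_right hn h₀]

theorem hermiteH_odd_zero (k : ℕ) : hermiteH (2 * k + 1) 0 = 0 := by
  induction k with
  | zero => simp [hermiteH]
  | succ k ih =>
    rw [show 2 * (k + 1) + 1 = 2 * k + 1 + 2 by ring, hermiteH_add_two, ih]; simp

theorem hermiteH_even_zero_pow_four_le (k : ℕ) :
    (3 * k + 1) * hermiteH (2 * k) 0 ^ 4 ≤ ((2 : ℝ) ^ (2 * k) * (2 * k).factorial) ^ 2 := by
  induction k with
  | zero => simp [hermiteH]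
  | succ k ih =>
    rw [show 2 * (k + 1) = 2 * k + 2 by ring, hermiteH_add_two, Nat.factorial_succ,
      Nat.factorial_succ]
    push_cast
    set a := hermiteH (2 * k) 0
    have e : ((2 : ℝ) ^ (2 * k + 2) * ((2 * k + 1 + 1) * ((2 * k + 1) * (2 * k).factorial))) ^ 2 =
        (4 * (2 * k + 2) * (2 * k + 1)) ^ 2 *
          ((2 : ℝ) ^ (2 * k) * (2 * k).factorial) ^ 2 := by ring
    rw [e]
    refine le_trans ?_ (mul_le_mul_of_nonneg_left ih (by positivity))
    have hc : (0 : ℝ) ≤ 16 * (2 * k + 1) ^ 2 * a ^ 4 := by positivity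
    have hp : (3 * (k + 1) + 1) * (2 * k + 1 : ℝ) ^ 2 ≤ (2 * k + 2) ^ 2 * (3 * k + 1) := by
      nlinarith [(Nat.cast_nonneg k : (0 : ℝ) ≤ k)]
    nlinarith [mul_le_mul_of_nonneg_left hp hc]

theorem hermiteH_zero_energy_le (n : ℕ) :
    √(2 * n + 1) * (hermiteH n 0 ^ 2 + hermiteH (n + 1) 0 ^ 2 / (2 * n + 1)) ≤
      1.086435 ^ 2 * ((2 : ℝ) ^ n * n.factorial) := by
  refine (sq_le_sq₀ (by positivity) (by positivity)).mp ?_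
  rw [mul_pow, sq_sqrt (by positivity)]
  rcases n.even_or_odd' with ⟨k, rfl | rfl⟩
  · have h := hermiteH_even_zero_pow_four_le k
    rw [hermiteH_odd_zero]
    have hk : (0 : ℝ) ≤ k := k.cast_nonneg
    have ha : 0 ≤ hermiteH (2 * k) 0 ^ 4 := by positivity
    push_cast
    generalize (2 : ℝ) ^ (2 * k) * (2 * k).factorial = M at *
    have e : (2 * (2 * (k : ℝ)) + 1) *
        (hermiteH (2 * k) 0 ^ 2 + 0 ^ 2 / (2 * (2 * k) + 1)) ^ 2 =
          (4 * k + 1) * hermiteH (2 * k) 0 ^ 4 := by ring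
    rw [e]
    nlinarith [mul_nonneg hk ha]
  · have h := hermiteH_even_zero_pow_four_le (k + 1)
    rw [hermiteH_odd_zero, show 2 * k + 1 + 1 = 2 * (k + 1) by ring]
    have hk : (0 : ℝ) ≤ k := k.cast_nonneg
    have e : (2 : ℝ) ^ (2 * (k + 1)) * (2 * (k + 1)).factorial =
        2 * (2 * k + 2) * (2 ^ (2 * k + 1) * (2 * k + 1).factorial) := by
      rw [show 2 * (k + 1) = 2 * k + 1 + 1 by ring, Nat.factorial_succ (2 * k + 1)]
      push_cast
      ring
    rw [e] at h
    push_cast at h ⊢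
    generalize (2 : ℝ) ^ (2 * k + 1) * (2 * k + 1).factorial = M at *
    generalize hermiteH (2 * (k + 1)) 0 = a at *
    have e' : (2 * (2 * (k : ℝ) + 1) + 1) * (0 ^ 2 + a ^ 2 / (2 * (2 * k + 1) + 1)) ^ 2 =
        a ^ 4 / (4 * k + 3) := by
      field_simp
      ring
    rw [e', div_le_iff₀ (by positivity)]
    refine le_of_mul_le_mul_left (h.trans ?_) (by positivity : (0 : ℝ) < 3 * (k + 1) + 1)
    nlinarith [mul_nonneg hk (sq_nonneg M), mul_nonneg (mul_nonneg hk hk) (sq_nonneg M),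
      sq_nonneg M]

theorem hermiteFun_sq_le_of_sq_le (n : ℕ) {x : ℝ} (hx : 0 ≤ x) (hn : x ^ 2 ≤ 2 * n) :
    hermiteFun n x ^ 2 ≤ 1.086435 ^ 2 * ((2 : ℝ) ^ n * n.factorial) := by
  have h := sonin_bound hx (by linarith : x ^ 2 < 2 * (n : ℝ) + 1) (hasDerivAt_hermiteFun n)
    (hasDerivAt_hermiteFunDeriv n)
  have h1 : 1 ≤ √(2 * (n : ℝ) + 1 - x ^ 2) := one_le_sqrt.mpr (by linarith)
  refine le_trans (le_mul_of_one_le_left (sq_nonneg _) h1) (h.trans ?_)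
  simpa [hermiteFun, hermiteFunDeriv] using hermiteH_zero_energy_le n

theorem hermiteFun_sq_le (n : ℕ) {x : ℝ} (hx : 0 ≤ x) :
    hermiteFun n x ^ 2 ≤ 1.086435 ^ 2 * ((2 : ℝ) ^ n * n.factorial) := by
  rcases le_total (x ^ 2) (2 * n) with h | h
  · exact hermiteFun_sq_le_of_sq_le n hx h
  · have hb : √(2 * (n : ℝ)) ^ 2 = 2 * n := sq_sqrt (by positivity)
    have hmem : ∀ t ∈ Ici √(2 * (n : ℝ)), 0 ≤ t ∧ 2 * (n : ℝ) ≤ t ^ 2 := fun t ht =>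
      ⟨(sqrt_nonneg _).trans ht, (sqrt_le_left ((sqrt_nonneg _).trans ht)).mp ht⟩
    have hanti : AntitoneOn (hermiteFun n) (Ici √(2 * (n : ℝ))) := by
      refine antitoneOn_of_deriv_nonpos (convex_Ici _)
        (fun t _ => (hasDerivAt_hermiteFun n t).continuousAt.continuousWithinAt)
        (fun t _ => (hasDerivAt_hermiteFun n t).differentiableAt.differentiableWithinAt)
        fun t ht => ?_
      obtain ⟨h0, h2⟩ := hmem t (interior_subset ht)
      rw [(hasDerivAt_hermiteFun n t).deriv, hermiteFunDeriv]
      exact mul_nonpos_of_nonpos_of_nonneg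
        (sub_nonpos.mpr (hermiteH_nonneg_and_mul_le n h0 h2).2) (exp_nonneg _)
    have hle := hanti self_mem_Ici (mem_Ici.mpr (sqrt_le_iff.mpr ⟨hx, h⟩))
      (sqrt_le_iff.mpr ⟨hx, h⟩)
    have h0 : 0 ≤ hermiteFun n x :=
      mul_nonneg (hermiteH_nonneg_and_mul_le n hx h).1 (exp_nonneg _)
    exact (pow_le_pow_left₀ h0 hle 2).trans
      (hermiteFun_sq_le_of_sq_le n (sqrt_nonneg _) hb.le)

theorem hermite_upper_bound (x : ℝ) (j : ℕ) :
    |hermiteH j x| ≤ 1.086435 * Real.sqrt (j.factorial : ℝ) * (Real.sqrt 2) ^ j *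
      Real.exp (x ^ 2 / 2) := by
  have h := hermiteFun_sq_le j (abs_nonneg x)
  have e : (1.086435 : ℝ) ^ 2 * ((2 : ℝ) ^ j * j.factorial) =
      (1.086435 * √(j.factorial : ℝ) * √2 ^ j) ^ 2 := by
    rw [mul_pow, mul_pow, sq_sqrt (by positivity), ← pow_mul, mul_comm j 2, pow_mul,
      sq_sqrt (by norm_num)]
    ring
  rw [e] at h
  have h' := abs_le_of_sq_le_sq h (by positivity)
  rw [hermiteFun, abs_mul, abs_hermiteH_abs, abs_exp, sq_abs, exp_neg, ← div_eq_mul_inv,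
    div_le_iff₀ (exp_pos _)] at h'
  exact h'
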